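/- Truncation error for Gaussian weights: for every R > 0 there exists a constant C_R, depending only on R, such that for all 0 < h ≤ 1 the following holds: if W is a real centered Gaussian random variable of variance h and H := (−R/h) ∨ (W/h) ∧ (R/h), then 𝔼[(W/h − H)²] ≤ C_R h. -/

import Mathlib

open MeasureTheory ProbabilityTheory
open scoped NNReal

/-!
The error `x - clamp b x` vanishes for `|x| ≤ b` and is at most `|x|` in absolute value otherwise,
so its `p`-th power is at most `|x| ^ (p + q) / b ^ q` for every `q`. Applied with `p = 2`, `q = 4`
and `b = R / h` to `W / h`, whose law is `N(0, 1 / h)`, this bounds the mean square error by the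
sixth moment `15 / h ^ 3` divided by `(R / h) ^ 4`, which is `15 / R ^ 4 * h`.
-/

/-- The truncation of `x` to the symmetric interval `[-b, b]`. It is meant for `0 ≤ b`; if `-b` and
`b` are in the wrong order, the value is `-b`. -/
def clamp {α : Type*} [LinearOrder α] [Neg α] (b x : α) : α := max (-b) (min x b)

section OrderedGroup

variable {α : Type*} [AddCommGroup α] [LinearOrder α] [IsOrderedAddMonoid α] {b x : α}

lemma clamp_of_abs_le (hx : |x| ≤ b) : clamp b x = x := by
  rw [clamp, min_eq_left (abs_le.1 hx).2, max_eq_right (abs_le.1 hx).1]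

lemma clamp_mem_uIcc_zero (hb : 0 ≤ b) (x : α) : clamp b x ∈ Set.uIcc 0 x := by
  have hb' : -b ≤ 0 := neg_nonpos.2 hb
  rw [Set.mem_uIcc, clamp]
  grind

lemma abs_sub_clamp_le_abs (hb : 0 ≤ b) (x : α) : |x - clamp b x| ≤ |x| := by
  simpa only [sub_zero] using Set.abs_sub_right_of_mem_uIcc (clamp_mem_uIcc_zero hb x)

end OrderedGroup

lemma abs_sub_clamp_pow_mul_pow_le {α : Type*} [CommRing α] [LinearOrder α] [IsStrictOrderedRing α]
    {b : α} (hb : 0 ≤ b) (x : α) {p : ℕ} (hp : p ≠ 0) (q : ℕ) :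
    |x - clamp b x| ^ p * b ^ q ≤ |x| ^ (p + q) := by
  rcases le_total |x| b with hx | hx
  · rw [clamp_of_abs_le hx, sub_self, abs_zero, zero_pow hp, zero_mul]
    positivity
  · rw [pow_add]
    have hle := abs_sub_clamp_le_abs hb x
    gcongr

section TruncationError

variable {Ω : Type*} {mΩ : MeasurableSpace Ω} {P : Measure Ω} {X : Ω → ℝ} {b : ℝ}

lemma memLp_sub_clamp (hb : 0 ≤ b) {r : ENNReal} (hX : MemLp X r P) :
    MemLp (fun ω ↦ X ω - clamp b (X ω)) r P := by
  refine hX.mono ?_ (ae_of_all _ fun ω ↦ abs_sub_clamp_le_abs hb (X ω))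
  have hXm := hX.aemeasurable
  unfold clamp
  fun_prop

lemma integral_abs_sub_clamp_pow_le (hb : 0 < b) {p q : ℕ} (hp : p ≠ 0)
    (hX : Integrable (fun ω ↦ |X ω| ^ (p + q)) P) :
    ∫ ω, |X ω - clamp b (X ω)| ^ p ∂P ≤ (∫ ω, |X ω| ^ (p + q) ∂P) / b ^ q := by
  rw [← integral_div]
  refine integral_mono_of_nonneg (ae_of_all _ fun ω ↦ by positivity) (hX.div_const _)
    (ae_of_all _ fun ω ↦ ?_)
  rw [le_div_iff₀ (by positivity)]
  exact abs_sub_clamp_pow_mul_pow_le hb.le (X ω) hp q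

end TruncationError

section GaussianMoments

variable {v : ℝ≥0}

lemma integral_abs_rpow_gaussianReal (hv : v ≠ 0) {q : ℝ} (hq : -1 < q) :
    ∫ x, |x| ^ q ∂gaussianReal 0 v =
      (2 * v : ℝ) ^ (q / 2) * Real.Gamma ((q + 1) / 2) / √Real.pi := by
  have : (0 : ℝ) < v := by positivity
  calc ∫ x, |x| ^ q ∂gaussianReal 0 v
      = (√(2 * Real.pi * v))⁻¹ *
          ∫ x : ℝ, |x| ^ q * Real.exp (-(2 * v : ℝ)⁻¹ * |x| ^ (2 : ℝ)) := by
        rw [integral_gaussianReal_eq_integral_smul hv, ← integral_const_mul]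
        refine integral_congr_ae (ae_of_all _ fun x ↦ ?_)
        simp only [gaussianPDFReal, smul_eq_mul, sub_zero, Real.rpow_two, sq_abs]
        ring_nf
    _ = (√(2 * Real.pi * v))⁻¹ * ((2 * v : ℝ) ^ ((q + 1) / 2) * Real.Gamma ((q + 1) / 2)) := by
        rw [integral_comp_abs (f := fun x ↦ x ^ q * Real.exp (-(2 * v : ℝ)⁻¹ * x ^ (2 : ℝ))),
          integral_rpow_mul_exp_neg_mul_rpow two_pos hq (by positivity),
          neg_div, Real.rpow_neg_eq_inv_rpow, inv_inv]
        ring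
    _ = (2 * v : ℝ) ^ (q / 2) * Real.Gamma ((q + 1) / 2) / √Real.pi := by
        rw [add_div, Real.rpow_add (by positivity), ← Real.sqrt_eq_rpow, mul_right_comm 2,
          Real.sqrt_mul (by positivity)]
        field_simp

open scoped Nat in
lemma integral_pow_two_mul_gaussianReal (v : ℝ≥0) (n : ℕ) :
    ∫ x, x ^ (2 * n) ∂gaussianReal 0 v = (2 * n - 1)‼ * v ^ n := by
  rcases eq_or_ne v 0 with rfl | hv
  · rcases eq_or_ne n 0 with rfl | hn <;> simp [*]
  calc ∫ x, x ^ (2 * n) ∂gaussianReal 0 v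
      = ∫ x, |x| ^ ((2 * n : ℕ) : ℝ) ∂gaussianReal 0 v := by
        simp only [Real.rpow_natCast, (even_two_mul n).pow_abs]
    _ = (2 * v : ℝ) ^ n * Real.Gamma (n + 1 / 2) / √Real.pi := by
        rw [integral_abs_rpow_gaussianReal hv (by linarith [(2 * n).cast_nonneg (α := ℝ)]),
          Nat.cast_mul, Nat.cast_two, add_div, mul_div_cancel_left₀ _ two_ne_zero,
          Real.rpow_natCast]
    _ = (2 * n - 1)‼ * v ^ n := by
        rw [Real.Gamma_nat_add_half, mul_pow]
        field_simp

end GaussianMoments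

theorem gaussian_truncation_error_general {Ω : Type*} {mΩ : MeasurableSpace Ω} {P : Measure Ω}
    {W : Ω → ℝ} {R : ℝ} {h : ℝ≥0} (hR : 0 < R) (hh : 0 < h)
    (hW : HasLaw W (gaussianReal 0 h) P) :
    Integrable (fun ω ↦ (W ω / h - clamp (R / h) (W ω / h)) ^ 2) P ∧
      ∫ ω, (W ω / h - clamp (R / h) (W ω / h)) ^ 2 ∂P ≤ 15 / R ^ 4 * h := by
  have hb : 0 < R / h := by positivity
  have hX : HasLaw (fun ω ↦ W ω / h) (gaussianReal 0 h⁻¹) P := by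
    convert gaussianReal_div_const hW h using 2
    · exact (zero_div _).symm
    · ext
      push_cast
      field_simp
  have hLp (r : ℝ≥0) : MemLp (fun ω ↦ W ω / h) r P := hX.hasGaussianLaw.memLp ENNReal.coe_ne_top
  have hmoment : ∫ ω, |W ω / h| ^ 6 ∂P = 15 * (h⁻¹ : ℝ) ^ 3 := by
    simp only [Even.pow_abs (show Even 6 by decide)]
    exact (hX.integral_comp (by fun_prop)).trans (integral_pow_two_mul_gaussianReal h⁻¹ 3)
  refine ⟨(memLp_sub_clamp hb.le (hLp 2)).integrable_sq, ?_⟩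
  calc ∫ ω, (W ω / h - clamp (R / h) (W ω / h)) ^ 2 ∂P
      = ∫ ω, |W ω / h - clamp (R / h) (W ω / h)| ^ 2 ∂P := by simp only [sq_abs]
    _ ≤ (∫ ω, |W ω / h| ^ 6 ∂P) / (R / h) ^ 4 :=
        integral_abs_sub_clamp_pow_le (q := 4) hb two_ne_zero
          ((hLp 6).integrable_norm_pow (by decide))
    _ = 15 / R ^ 4 * h := by
        rw [hmoment]
        field_simp

/-- **Truncation error for Gaussian weights.**
For every `R > 0` there exists a constant `C_R`, depending only on `R`, such that for
all `0 < h ≤ 1` the following holds: if `W` is a real centered Gaussian random variable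
of variance `h` and `H := (-R/h) ∨ (W/h) ∧ (R/h)`, then `𝔼[(W/h - H)²] ≤ C_R h`. -/
theorem gaussian_truncation_error (R : ℝ) (hR : 0 < R) :
    ∃ C : ℝ, 0 < C ∧
      ∀ (h : ℝ≥0), 0 < h → (h : ℝ) ≤ 1 →
      ∀ (Ω : Type) [MeasurableSpace Ω] (μ : Measure Ω), IsProbabilityMeasure μ →
      ∀ (W : Ω → ℝ), Measurable W → μ.map W = gaussianReal 0 h →
        ∫ ω, (W ω / (h : ℝ)
            - max (-(R / (h : ℝ))) (min (W ω / (h : ℝ)) (R / (h : ℝ)))) ^ 2 ∂μ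
          ≤ C * (h : ℝ) :=
  ⟨15 / R ^ 4, by positivity, fun _ hh _ _ _ _ _ _ hW hlaw ↦
    (gaussian_truncation_error_general hR hh ⟨hW.aemeasurable, hlaw⟩).2⟩
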